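/- arXiv:math/0410207 — 2 statements merged into one kernel-verified Lean document; each statement's English description precedes it below -/
import Mathlib

section
/- Let Ω ⊂ ℝⁿ (n ≥ 2) be a bounded polyhedral domain with singular set S ≠ ∅ and η(x) = dist(x, S). Then there exists a constant κ > 0, depending only on Ω, such that for every function u : ℝⁿ → ℝ that is continuous on the closure of Ω, continuously differentiable on Ω, and satisfies u = 0 on ∂Ω, one has ∫_Ω u(x)²/η(x)² dx + ∫_Ω ‖∇u(x)‖² dx ≤ κ ∫_Ω ‖∇u(x)‖² dx (an inequality in the extended nonnegative reals). -/
open MeasureTheory Metric Set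
open scoped RealInnerProductSpace ENNReal

/-- `H` is an affine hyperplane in `ℝⁿ`. -/
def IsAffineHyperplane {n : ℕ} (H : Set (EuclideanSpace ℝ (Fin n))) : Prop :=
  ∃ (v : EuclideanSpace ℝ (Fin n)) (c : ℝ), v ≠ 0 ∧ H = {x | ⟪v, x⟫ = c}

/-- `Ω` is a bounded polyhedral domain with boundary contained in the union of the minimal
finite family `𝓗` of affine hyperplanes. -/
structure IsPolyhedralDomain {n : ℕ} (Ω : Set (EuclideanSpace ℝ (Fin n)))
    (𝓗 : Finset (Set (EuclideanSpace ℝ (Fin n)))) : Prop where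
  isOpen : IsOpen Ω
  isBounded : Bornology.IsBounded Ω
  frontier_closure : frontier Ω = frontier (closure Ω)
  hyperplane : ∀ H ∈ 𝓗, IsAffineHyperplane H
  subset_union : frontier Ω ⊆ ⋃ H ∈ 𝓗, H
  minimal : ∀ 𝓗' ⊂ 𝓗, ¬ frontier Ω ⊆ ⋃ H ∈ 𝓗', H

/-- The set of singular boundary points: boundary points lying on at least two
distinct hyperplanes of the family `𝓗`. -/
def polySingularSet {n : ℕ} (Ω : Set (EuclideanSpace ℝ (Fin n)))
    (𝓗 : Finset (Set (EuclideanSpace ℝ (Fin n)))) : Set (EuclideanSpace ℝ (Fin n)) :=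
  {x | x ∈ frontier Ω ∧ ∃ H₁ ∈ 𝓗, ∃ H₂ ∈ 𝓗, H₁ ≠ H₂ ∧ x ∈ H₁ ∧ x ∈ H₂}



/-- one dimensional FTC -/
lemma hp_ftc (φ φ' : ℝ → ℝ) (d : ℝ) (hd : 0 < d) (hc : ContinuousOn φ (Icc 0 d))
    (hder : ∀ s ∈ Ioo 0 d, HasDerivAt φ (φ' s) s) (h0 : φ d = 0) (hm : Measurable φ') :
    ENNReal.ofReal |φ 0| ≤ ∫⁻ s in Ioo 0 d, ENNReal.ofReal |φ' s| := by
  by_cases hfin : ∫⁻ s in Ioo 0 d, ENNReal.ofReal |φ' s| = ⊤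
  · rw [hfin]; exact le_top
  have hint : IntegrableOn φ' (Ioo 0 d) := by
    refine ⟨hm.aestronglyMeasurable, ?_⟩
    rw [hasFiniteIntegral_iff_norm]
    exact lt_top_iff_ne_top.2 hfin
  have hint' : IntervalIntegrable φ' volume 0 d :=
    (intervalIntegrable_iff_integrableOn_Ioo_of_le hd.le).2 hint
  have h := intervalIntegral.integral_eq_sub_of_hasDeriv_right_of_le hd.le hc
    (fun x hx => (hder x hx).hasDerivWithinAt) hint'
  rw [h0, zero_sub, intervalIntegral.integral_of_le hd.le, integral_Ioc_eq_integral_Ioo] at h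
  have h2 : |φ 0| ≤ ∫ s in Ioo 0 d, |φ' s| := by
    rw [← abs_neg, ← h]
    exact abs_integral_le_integral_abs
  calc ENNReal.ofReal |φ 0| ≤ ENNReal.ofReal (∫ s in Ioo 0 d, |φ' s|) := ENNReal.ofReal_le_ofReal h2
    _ = _ := ofReal_integral_eq_lintegral_ofReal hint.abs (Filter.Eventually.of_forall fun _ => abs_nonneg _)

lemma hp_w1 (d : ℝ) (hd : 0 < d) :
    ∫⁻ s in Ioo 0 d, ENNReal.ofReal ((d - s) ^ (-(1/2) : ℝ)) = ENNReal.ofReal (2 * d ^ (1/2 : ℝ)) := by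
  have hi : IntervalIntegrable (fun s : ℝ => (d - s) ^ (-(1/2) : ℝ)) volume 0 d := by
    have := (intervalIntegral.intervalIntegrable_rpow' (a := d) (b := 0) (r := (-(1/2) : ℝ)) (by norm_num)).comp_sub_left d
    simpa using this
  have hv : ∫ s in (0:ℝ)..d, (d - s) ^ (-(1/2) : ℝ) = 2 * d ^ (1/2 : ℝ) := by
    rw [intervalIntegral.integral_comp_sub_left (fun s : ℝ => s ^ (-(1/2) : ℝ))]
    rw [sub_self, sub_zero, integral_rpow (Or.inl (by norm_num))]
    rw [Real.zero_rpow (by norm_num)]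
    norm_num
    ring
  rw [← hv, intervalIntegral.integral_of_le hd.le, integral_Ioc_eq_integral_Ioo]
  rw [ofReal_integral_eq_lintegral_ofReal ((intervalIntegrable_iff_integrableOn_Ioo_of_le hd.le).1 hi)]
  filter_upwards [self_mem_ae_restrict measurableSet_Ioo] with s hs
  exact Real.rpow_nonneg (by linarith [hs.2]) _

lemma hp_w2 (d : ℝ) (hd : 0 < d) :
    ∫⁻ s in Ioi (0:ℝ), ENNReal.ofReal (2 * (d + s) ^ (-(3/2) : ℝ) * d ^ (1/2 : ℝ)) ≤ 4 := by
  have hder : ∀ x ∈ Ici (0:ℝ), HasDerivAt (fun s : ℝ => -4 * d ^ (1/2 : ℝ) * (d + s) ^ (-(1/2) : ℝ))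
      (2 * (d + x) ^ (-(3/2) : ℝ) * d ^ (1/2 : ℝ)) x := by
    intro x hx
    have hx' : 0 ≤ x := hx
    have h1 : HasDerivAt (fun s : ℝ => d + s) 1 x := (hasDerivAt_id x).const_add d
    have h2 := (h1.rpow_const (p := (-(1/2) : ℝ)) (Or.inl (by positivity))).const_mul (-4 * d ^ (1/2 : ℝ))
    refine h2.congr_deriv ?_
    rw [show (-(1/2) - 1 : ℝ) = -(3/2) by norm_num]
    ring
  have hnn : ∀ x ∈ Ioi (0:ℝ), 0 ≤ 2 * (d + x) ^ (-(3/2) : ℝ) * d ^ (1/2 : ℝ) := by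
    intro x hx
    have hx' : 0 < x := hx
    positivity
  have hlim : Filter.Tendsto (fun s : ℝ => -4 * d ^ (1/2 : ℝ) * (d + s) ^ (-(1/2) : ℝ)) Filter.atTop (nhds 0) := by
    have := (tendsto_rpow_neg_atTop (y := 1/2) (by norm_num)).comp
      (Filter.tendsto_atTop_add_const_left Filter.atTop d Filter.tendsto_id)
    simpa using this.const_mul (-4 * d ^ (1/2 : ℝ))
  have hI := integrableOn_Ioi_deriv_of_nonneg' hder hnn hlim
  have hV := integral_Ioi_of_hasDerivAt_of_nonneg' hder hnn hlim
  rw [← ofReal_integral_eq_lintegral_ofReal hI, hV]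
  · rw [show (0 - -4 * d ^ (1/2 : ℝ) * (d + 0) ^ (-(1/2) : ℝ)) = 4 * (d ^ (1/2 : ℝ) * d ^ (-(1/2) : ℝ)) by
      rw [add_zero]; ring]
    rw [← Real.rpow_add hd]
    norm_num
  · filter_upwards [self_mem_ae_restrict measurableSet_Ioi] with s hs
    exact hnn s hs

lemma hp_hardy1 (φ φ' : ℝ → ℝ) (d : ℝ) (hd : 0 < d) (hc : ContinuousOn φ (Icc 0 d))
    (hder : ∀ s ∈ Ioo 0 d, HasDerivAt φ (φ' s) s) (h0 : φ d = 0) (hm : Measurable φ') :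
    ENNReal.ofReal (φ 0 ^ 2 / d ^ 2) ≤
      ∫⁻ s in Ioo 0 d, ENNReal.ofReal (2 * d ^ (-(3/2) : ℝ) * (d - s) ^ (1/2 : ℝ)) *
        ENNReal.ofReal (φ' s ^ 2) := by
  have h1 := hp_ftc φ φ' d hd hc hder h0 hm
  set f : ℝ → ℝ≥0∞ := fun s => ENNReal.ofReal ((d - s) ^ (1/4 : ℝ) * |φ' s|) with hf
  set g : ℝ → ℝ≥0∞ := fun s => ENNReal.ofReal ((d - s) ^ (-(1/4) : ℝ)) with hg
  have hfm : Measurable f := by rw [hf]; fun_prop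
  have hgm : Measurable g := by rw [hg]; fun_prop
  have h2 := ENNReal.lintegral_mul_le_Lp_mul_Lq (volume.restrict (Ioo 0 d))
    (Real.HolderConjugate.two_two) hfm.aemeasurable hgm.aemeasurable
  have e1 : ∫⁻ s in Ioo 0 d, ENNReal.ofReal |φ' s| = ∫⁻ s in Ioo 0 d, (f * g) s := by
    refine setLIntegral_congr_fun measurableSet_Ioo fun s hs => ?_
    have hp : 0 < d - s := by linarith [hs.2]
    simp only [hf, hg, Pi.mul_apply]
    rw [← ENNReal.ofReal_mul (by positivity)]
    congr 1
    rw [mul_right_comm, ← Real.rpow_add hp]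
    norm_num
  have e2 : ∫⁻ s in Ioo 0 d, f s ^ (2:ℝ) = ∫⁻ s in Ioo 0 d, ENNReal.ofReal ((d - s) ^ (1/2 : ℝ) * φ' s ^ 2) := by
    refine setLIntegral_congr_fun measurableSet_Ioo fun s hs => ?_
    have hp : 0 < d - s := by linarith [hs.2]
    simp only [hf]
    rw [ENNReal.ofReal_rpow_of_nonneg (by positivity) (by norm_num), Real.mul_rpow (by positivity) (by positivity),
      ← Real.rpow_mul hp.le]
    norm_num
  have e3 : ∫⁻ s in Ioo 0 d, g s ^ (2:ℝ) = ENNReal.ofReal (2 * d ^ (1/2 : ℝ)) := by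
    rw [← hp_w1 d hd]
    refine setLIntegral_congr_fun measurableSet_Ioo fun s hs => ?_
    have hp : 0 < d - s := by linarith [hs.2]
    simp only [hg]
    rw [ENNReal.ofReal_rpow_of_nonneg (by positivity) (by norm_num), 
      ← Real.rpow_mul hp.le]
    norm_num
  rw [← e1, e2, e3] at h2
  have h3 := h1.trans h2
  have h4 : ENNReal.ofReal (φ 0 ^ 2) ≤
      (∫⁻ s in Ioo 0 d, ENNReal.ofReal ((d - s) ^ (1/2 : ℝ) * φ' s ^ 2)) * ENNReal.ofReal (2 * d ^ (1/2 : ℝ)) := by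
    have := ENNReal.rpow_le_rpow h3 (show (0:ℝ) ≤ 2 by norm_num)
    rw [ENNReal.mul_rpow_of_nonneg _ _ (by norm_num), ← ENNReal.rpow_mul, ← ENNReal.rpow_mul,
      ENNReal.ofReal_rpow_of_nonneg (abs_nonneg _) (by norm_num)] at this
    simpa using this
  calc ENNReal.ofReal (φ 0 ^ 2 / d ^ 2) = ENNReal.ofReal (φ 0 ^ 2) * ENNReal.ofReal ((d^2)⁻¹) := by
        rw [div_eq_mul_inv, ENNReal.ofReal_mul (by positivity)]
    _ ≤ _ := mul_le_mul_left h4 _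
    _ = ENNReal.ofReal (2 * d ^ (-(3/2) : ℝ)) * ∫⁻ s in Ioo 0 d, ENNReal.ofReal ((d - s) ^ (1/2 : ℝ) * φ' s ^ 2) := by
        rw [mul_assoc, ← ENNReal.ofReal_mul (by positivity), mul_comm]
        congr 2
        rw [show ((d^2)⁻¹ : ℝ) = d ^ (-2 : ℝ) by
          rw [Real.rpow_neg hd.le]; norm_num]
        rw [mul_assoc, ← Real.rpow_add hd]
        norm_num
    _ = _ := by
        rw [← lintegral_const_mul _ (by fun_prop)]
        refine setLIntegral_congr_fun measurableSet_Ioo fun s hs => ?_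
        have hp : 0 < d - s := by linarith [hs.2]
        rw [← ENNReal.ofReal_mul (by positivity), ← ENNReal.ofReal_mul (by positivity)]
        congr 1
        ring

/-- exit time from `Ω` in direction `v`. -/
noncomputable def hpExit {E : Type*} [AddCommGroup E] [Module ℝ E] (Ω : Set E) (v x : E) : ℝ :=
  sInf {s : ℝ | 0 ≤ s ∧ x + s • v ∉ Ω}

section exit
variable {E : Type*} [NormedAddCommGroup E] [NormedSpace ℝ E]

lemma hp_bdd (Ω : Set E) (v x : E) : BddBelow {s : ℝ | 0 ≤ s ∧ x + s • v ∉ Ω} :=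
  ⟨0, fun _ h => h.1⟩

lemma hp_exit_nonneg (Ω : Set E) (v x : E) : 0 ≤ hpExit Ω v x :=
  Real.sInf_nonneg fun _ h => h.1

lemma hp_exit_le (Ω : Set E) (v x : E) (s : ℝ) (hs : 0 ≤ s) (h : x + s • v ∉ Ω) :
    hpExit Ω v x ≤ s := csInf_le (hp_bdd Ω v x) ⟨hs, h⟩

lemma hp_mem_of_lt (Ω : Set E) (v x : E) (s : ℝ) (hs : 0 ≤ s) (h : s < hpExit Ω v x) :
    x + s • v ∈ Ω := by
  by_contra hc
  exact absurd (hp_exit_le Ω v x s hs hc) (not_le.2 h)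

lemma hp_nonempty (Ω : Set E) (hb : Bornology.IsBounded Ω) (v x : E) (hv : v ≠ 0) :
    {s : ℝ | 0 ≤ s ∧ x + s • v ∉ Ω}.Nonempty := by
  obtain ⟨R, hR⟩ := hb.exists_norm_le
  have hv' : 0 < ‖v‖ := norm_pos_iff.2 hv
  refine ⟨(|R| + ‖x‖ + 1) / ‖v‖, by positivity, fun hmem => ?_⟩
  have h1 := hR _ hmem
  have h2 : ‖((|R| + ‖x‖ + 1) / ‖v‖) • v‖ = |R| + ‖x‖ + 1 := by
    rw [norm_smul, Real.norm_of_nonneg (by positivity)]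
    field_simp
  have h3 := norm_sub_le (x + ((|R| + ‖x‖ + 1) / ‖v‖) • v) x
  rw [add_sub_cancel_left, h2] at h3
  linarith [le_abs_self R]

lemma hp_exit_not_mem (Ω : Set E) (ho : IsOpen Ω) (hb : Bornology.IsBounded Ω) (v x : E)
    (hv : v ≠ 0) : x + hpExit Ω v x • v ∉ Ω := by
  have hcl : IsClosed {s : ℝ | 0 ≤ s ∧ x + s • v ∉ Ω} :=
    isClosed_Ici.inter (ho.isClosed_compl.preimage (f := fun s : ℝ => x + s • v) (by fun_prop))
  exact (hcl.csInf_mem (hp_nonempty Ω hb v x hv) (hp_bdd Ω v x)).2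

lemma hp_exit_pos (Ω : Set E) (ho : IsOpen Ω) (hb : Bornology.IsBounded Ω) (v x : E)
    (hv : v ≠ 0) (hx : x ∈ Ω) : 0 < hpExit Ω v x := by
  refine lt_of_le_of_ne (hp_exit_nonneg Ω v x) fun h => ?_
  have := hp_exit_not_mem Ω ho hb v x hv
  rw [← h] at this
  simp [hx] at this

lemma hp_exit_frontier (Ω : Set E) (ho : IsOpen Ω) (hb : Bornology.IsBounded Ω) (v x : E)
    (hv : v ≠ 0) (hx : x ∈ Ω) : x + hpExit Ω v x • v ∈ frontier Ω := by
  rw [ho.frontier_eq]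
  refine ⟨?_, hp_exit_not_mem Ω ho hb v x hv⟩
  have hd := hp_exit_pos Ω ho hb v x hv hx
  have hc : Continuous (fun s : ℝ => x + s • v) := by fun_prop
  have : hpExit Ω v x ∈ closure (Ico 0 (hpExit Ω v x)) := by
    rw [closure_Ico hd.ne]; exact ⟨hd.le, le_rfl⟩
  exact map_mem_closure (f := fun s : ℝ => x + s • v) hc this fun s hs => hp_mem_of_lt Ω v x s hs.1 hs.2

lemma hp_exit_shift (Ω : Set E) (ho : IsOpen Ω) (hb : Bornology.IsBounded Ω) (v x : E)
    (hv : v ≠ 0) (s : ℝ) (hs : 0 ≤ s) (hsd : s < hpExit Ω v x) :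
    hpExit Ω v (x + s • v) = hpExit Ω v x - s := by
  apply le_antisymm
  · apply hp_exit_le _ _ _ _ (by linarith)
    rw [add_assoc, ← add_smul, add_sub_cancel]
    exact hp_exit_not_mem Ω ho hb v x hv
  · have h := hp_exit_not_mem Ω ho hb v (x + s • v) hv
    rw [add_assoc, ← add_smul] at h
    have := hp_exit_le Ω v x _ (by linarith [hp_exit_nonneg Ω v (x + s • v)]) h
    linarith

lemma hp_exit_meas [MeasurableSpace E] [BorelSpace E] (Ω : Set E) (ho : IsOpen Ω)
    (hb : Bornology.IsBounded Ω) (v : E) (hv : v ≠ 0) : Measurable (hpExit Ω v) := by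
  refine measurable_of_Ioi fun t => ?_
  rcases lt_or_ge t 0 with ht | ht
  · convert MeasurableSet.univ
    ext x
    simpa using ht.trans_le (hp_exit_nonneg Ω v x)
  · apply IsOpen.measurableSet
    have : hpExit Ω v ⁻¹' Ioi t = {x | ∀ s ∈ Icc 0 t, x + s • v ∈ Ω} := by
      ext x
      constructor
      · intro h s hs
        exact hp_mem_of_lt Ω v x s hs.1 (hs.2.trans_lt h)
      · intro h
        by_contra hc
        have hc' : hpExit Ω v x ≤ t := not_lt.1 hc
        exact hp_exit_not_mem Ω ho hb v x hv (h _ ⟨hp_exit_nonneg Ω v x, hc'⟩)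
    rw [this, isOpen_iff_eventually]
    intro x hx
    refine isCompact_Icc.eventually_forall_of_forall_eventually fun s hs => ?_
    have hc : Continuous (fun z : E × ℝ => z.1 + z.2 • v) := by fun_prop
    exact hc.continuousAt.eventually_mem (ho.mem_nhds (hx s hs))

/-- Hardy inequality in direction `v`. -/
lemma hp_hardy_dir [MeasurableSpace E] [BorelSpace E] [FiniteDimensional ℝ E]
    (μ : Measure E) [μ.IsAddHaarMeasure]
    (Ω : Set E) (ho : IsOpen Ω)
    (hb : Bornology.IsBounded Ω) (v : E) (hv : v ≠ 0) (u : E → ℝ)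
    (hc : ContinuousOn u (closure Ω)) (hd : DifferentiableOn ℝ u Ω)
    (h0 : ∀ x ∈ frontier Ω, u x = 0) :
    ∫⁻ x in Ω, ENNReal.ofReal (u x ^ 2 / hpExit Ω v x ^ 2) ∂μ ≤
      4 * ∫⁻ x in Ω, ENNReal.ofReal ((fderiv ℝ u x v) ^ 2) ∂μ := by
  classical
  set D := hpExit Ω v with hD
  have hDm : Measurable D := hp_exit_meas Ω ho hb v hv
  have hgm : Measurable (fun x => fderiv ℝ u x v) := measurable_fderiv_apply_const ℝ u v
  set G : E → ℝ → ℝ≥0∞ := fun y s => Ω.indicator (fun y => 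
    ENNReal.ofReal (2 * (D y + s) ^ (-(3/2) : ℝ) * D y ^ (1/2 : ℝ)) *
      ENNReal.ofReal ((fderiv ℝ u y v) ^ 2)) y with hG
  have hGm : Measurable (fun z : E × ℝ => G z.1 z.2) := by
    have : (fun z : E × ℝ => G z.1 z.2) = (Prod.fst ⁻¹' Ω).indicator (fun z : E × ℝ => 
      ENNReal.ofReal (2 * (D z.1 + z.2) ^ (-(3/2) : ℝ) * D z.1 ^ (1/2 : ℝ)) *
      ENNReal.ofReal ((fderiv ℝ u z.1 v) ^ 2)) := by
      ext z
      simp only [hG, Set.indicator, mem_preimage]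
    rw [this]
    refine Measurable.indicator ?_ (measurable_fst ho.measurableSet)
    have h1 : Measurable (fun z : E × ℝ => D z.1) := hDm.comp measurable_fst
    have h2 : Measurable (fun z : E × ℝ => fderiv ℝ u z.1 v) := hgm.comp measurable_fst
    fun_prop
  have hpt : ∀ x ∈ Ω, ENNReal.ofReal (u x ^ 2 / D x ^ 2) ≤
      ∫⁻ s in Ioi (0:ℝ), G (x + s • v) s := by
    intro x hx
    have hdx : 0 < D x := hp_exit_pos Ω ho hb v x hv hx
    have hl : Continuous (fun s : ℝ => x + s • v) := by fun_prop
    have hin : ∀ s ∈ Ico 0 (D x), x + s • v ∈ Ω := fun s hs => hp_mem_of_lt Ω v x s hs.1 hs.2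
    have key := hp_hardy1 (fun s => u (x + s • v)) (fun s => fderiv ℝ u (x + s • v) v) (D x) hdx
      (by
        refine hc.comp hl.continuousOn fun s hs => ?_
        rcases hs.2.lt_or_eq with h | h
        · exact subset_closure (hin s ⟨hs.1, h⟩)
        · rw [h]; exact frontier_subset_closure (hp_exit_frontier Ω ho hb v x hv hx))
      (by
        intro s hs
        have h1 := (hd.differentiableAt (ho.mem_nhds (hin s ⟨hs.1.le, hs.2⟩))).hasFDerivAt
        have h2 : HasDerivAt (fun s : ℝ => x + s • v) v s := by
          simpa using ((hasDerivAt_id s).smul_const v).const_add x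
        exact h1.comp_hasDerivAt s h2)
      (h0 _ (hp_exit_frontier Ω ho hb v x hv hx))
      (hgm.comp hl.measurable)
    simp only [zero_smul, add_zero] at key
    refine key.trans ?_
    calc _ = ∫⁻ s in Ioo 0 (D x), G (x + s • v) s := by
          refine setLIntegral_congr_fun measurableSet_Ioo fun s hs => ?_
          have e : D (x + s • v) = D x - s := hp_exit_shift Ω ho hb v x hv s hs.1.le hs.2
          simp only [hG]
          rw [indicator_of_mem (hin s ⟨hs.1.le, hs.2⟩), e, sub_add_cancel]
      _ ≤ _ := lintegral_mono_set fun s hs => hs.1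
  have hl2 : Continuous (fun z : E × ℝ => (z.1 + z.2 • v, z.2)) := by fun_prop
  calc ∫⁻ x in Ω, ENNReal.ofReal (u x ^ 2 / D x ^ 2) ∂μ 
      ≤ ∫⁻ x in Ω, (∫⁻ s in Ioi (0:ℝ), G (x + s • v) s) ∂μ := 
        setLIntegral_mono' ho.measurableSet hpt
    _ ≤ ∫⁻ x, (∫⁻ s in Ioi (0:ℝ), G (x + s • v) s) ∂μ := setLIntegral_le_lintegral _ _
    _ = ∫⁻ s in Ioi (0:ℝ), (∫⁻ x, G (x + s • v) s ∂μ) := 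
        lintegral_lintegral_swap (hGm.comp hl2.measurable).aemeasurable
    _ = ∫⁻ s in Ioi (0:ℝ), (∫⁻ x, G x s ∂μ) := by
        refine lintegral_congr fun s => ?_
        exact lintegral_add_right_eq_self (fun x => G x s) (s • v)
    _ = ∫⁻ x, (∫⁻ s in Ioi (0:ℝ), G x s) ∂μ := 
        (lintegral_lintegral_swap (f := G) hGm.aemeasurable).symm
    _ ≤ ∫⁻ x, Ω.indicator (fun x => 4 * ENNReal.ofReal ((fderiv ℝ u x v) ^ 2)) x ∂μ := by
        refine lintegral_mono fun x => ?_
        by_cases hx : x ∈ Ω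
        · simp only [hG, indicator_of_mem hx]
          rw [lintegral_mul_const _ (by fun_prop)]
          exact mul_le_mul_left (hp_w2 _ (hp_exit_pos Ω ho hb v x hv hx)) _
        · simp [hG, indicator_of_notMem hx]
    _ = _ := by
        rw [lintegral_indicator ho.measurableSet, lintegral_const_mul _ (by fun_prop)]

/-- a convex open obstacle. -/
lemma hp_obstacle [Nontrivial E] (Ω P K : Set E) (hb : Bornology.IsBounded Ω) (hPo : IsOpen P)
    (hPc : Convex ℝ P) (hPne : P.Nonempty) (hPΩ : Disjoint P Ω) (hK : IsCompact K) :
    ∃ V : Finset E, ∃ C : ℝ, 0 < C ∧ ∀ p ∈ K, p ∈ closure P → ∀ x ∈ Ω, x ≠ p →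
      ∃ v ∈ V, ∃ s, 0 ≤ s ∧ s ≤ C * dist x p ∧ x + s • v ∉ Ω := by
  classical
  obtain ⟨z, hz⟩ := hPne
  obtain ⟨r, hr, hrP⟩ := Metric.isOpen_iff.1 hPo z hz
  obtain ⟨R, hR⟩ := hb.exists_norm_le
  obtain ⟨e, he⟩ := exists_norm_eq E zero_le_one
  obtain ⟨t, -, htf, htK⟩ := finite_cover_balls_of_compact hK (half_pos hr)
  refine ⟨insert e (htf.toFinset.image fun q => z - q), max (3 / r) ((2 * |R| + 1) * (3 / r)),
    lt_max_of_lt_left (by positivity), fun p hp hpP x hx hxp => ?_⟩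
  have hδ : 0 < dist x p := dist_pos.2 hxp
  rcases le_or_gt (dist x p) (r / 3) with h | h
  · obtain ⟨q, hq, hpq⟩ := mem_iUnion₂.1 (htK hp)
    rw [mem_ball] at hpq
    set s := 3 / r * dist x p with hs
    have hs0 : 0 < s := by positivity
    have hs1 : s ≤ 1 := by
      rw [hs]; calc 3 / r * dist x p ≤ 3 / r * (r / 3) := by gcongr
        _ = 1 := by field_simp
    refine ⟨z - q, by simp only [Finset.mem_insert, Finset.mem_image, Set.Finite.mem_toFinset]; exact Or.inr ⟨q, hq, rfl⟩, s, hs0.le, ?_, ?_⟩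
    · exact mul_le_mul_of_nonneg_right (le_max_left _ _) hδ.le
    · intro hmem
      refine disjoint_left.1 hPΩ ?_ hmem
      -- write `x + s (z - q) = (1 - s) p + s w`
      set w := z + (p - q) + s⁻¹ • (x - p) with hw
      have hwP : w ∈ P := by
        apply hrP
        rw [mem_ball, dist_eq_norm, hw, add_assoc, add_sub_cancel_left]
        have h1 : ‖s⁻¹ • (x - p)‖ = r / 3 := by
          rw [norm_smul, norm_inv, Real.norm_of_nonneg hs0.le, ← dist_eq_norm, hs]
          field_simp
        have h2 : ‖p - q‖ < r / 2 := by rw [← dist_eq_norm]; exact hpq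
        calc _ ≤ ‖p - q‖ + ‖s⁻¹ • (x - p)‖ := norm_add_le _ _
          _ < r := by rw [h1]; linarith
      have hcomb : x + s • (z - q) = (1 - s) • p + s • w := by
        rw [hw, smul_add, smul_add, smul_inv_smul₀ hs0.ne']
        module
      rw [hcomb]
      rcases hs1.lt_or_eq with hlt | heq
      · have := hPc.openSegment_closure_interior_subset_interior hpP (by rwa [hPo.interior_eq] : w ∈ interior P)
        rw [hPo.interior_eq] at this
        exact this ⟨1 - s, s, by linarith, hs0, by ring, rfl⟩
      · rw [heq]; simpa using hwP
  · refine ⟨e, Finset.mem_insert_self _ _, 2 * |R| + 1, by positivity, ?_, ?_⟩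
    · calc 2 * |R| + 1 = (2 * |R| + 1) * (3 / r) * (r / 3) := by field_simp
        _ ≤ (2 * |R| + 1) * (3 / r) * dist x p := by gcongr
        _ ≤ _ := mul_le_mul_of_nonneg_right (le_max_right _ _) hδ.le
    · intro hmem
      have h1 := hR _ hmem
      have h2 := hR _ hx
      have h3 := norm_sub_le (x + (2 * |R| + 1) • e) x
      rw [add_sub_cancel_left, norm_smul, he, Real.norm_of_nonneg (by positivity)] at h3
      linarith [le_abs_self R]

end exit

section cells
variable {n : ℕ}

lemma hp_dense_compl (H : Set (EuclideanSpace ℝ (Fin n))) (h : IsAffineHyperplane H) :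
    IsOpen Hᶜ ∧ Dense Hᶜ := by
  obtain ⟨v, c, hv, rfl⟩ := h
  constructor
  · exact (isClosed_eq (by fun_prop) continuous_const).isOpen_compl
  · intro x
    by_cases hx : ⟪v, x⟫ = c
    · have ht : Filter.Tendsto (fun t : ℝ => x + t • v) (nhdsWithin 0 {0}ᶜ) (nhds x) := by
        have hc : Continuous (fun t : ℝ => x + t • v) := by fun_prop
        have := hc.tendsto 0
        simp only [zero_smul, add_zero] at this
        exact this.mono_left nhdsWithin_le_nhds
      refine mem_closure_of_tendsto ht ?_
      filter_upwards [self_mem_nhdsWithin] with t ht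
      have ht' : t ≠ 0 := ht
      simp only [mem_compl_iff, mem_setOf_eq, inner_add_right, inner_smul_right, hx]
      simp [ht', hv]
    · exact subset_closure hx

lemma hp_geometry (Ω : Set (EuclideanSpace ℝ (Fin n))) (𝓗 : Finset (Set (EuclideanSpace ℝ (Fin n))))
    (hn : 2 ≤ n) (hΩ : IsPolyhedralDomain Ω 𝓗) :
    ∃ V : Finset (EuclideanSpace ℝ (Fin n)), ∃ C : ℝ, 0 < C ∧ ∀ p ∈ frontier Ω, ∀ x ∈ Ω,
      ∃ v ∈ V, ∃ s, 0 ≤ s ∧ s ≤ C * dist x p ∧ x + s • v ∉ Ω := by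
  classical
  haveI : Nonempty (Fin n) := ⟨⟨0, by omega⟩⟩
  have hd : ∀ H ∈ 𝓗, IsOpen Hᶜ ∧ Dense Hᶜ := fun H hH => hp_dense_compl H (hΩ.hyperplane H hH)
  choose! a c ha using hΩ.hyperplane
  set P : Finset (Set (EuclideanSpace ℝ (Fin n))) → Set (EuclideanSpace ℝ (Fin n)) :=
    fun A => ⋂ H ∈ 𝓗, if H ∈ A then {x | ⟪a H, x⟫ < c H} else {x | c H < ⟪a H, x⟫} with hP
  have hPo : ∀ A, IsOpen (P A) := by
    intro A
    refine isOpen_biInter_finset fun H hH => ?_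
    split_ifs
    · exact isOpen_lt (by fun_prop) continuous_const
    · exact isOpen_lt continuous_const (by fun_prop)
  have hPc : ∀ A, Convex ℝ (P A) := by
    intro A
    refine convex_iInter₂ fun H hH => ?_
    split_ifs
    · exact convex_halfSpace_lt (innerₗ _ (a H)).isLinear _
    · exact convex_halfSpace_gt (innerₗ _ (a H)).isLinear _
  have hK : IsCompact (frontier Ω) :=
    Metric.isCompact_of_isClosed_isBounded isClosed_frontier
      (hΩ.isBounded.closure.subset frontier_subset_closure)
  have hob : ∀ A, ∃ V : Finset (EuclideanSpace ℝ (Fin n)), ∃ C : ℝ, 0 < C ∧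
      ((P A).Nonempty → Disjoint (P A) Ω → ∀ p ∈ frontier Ω, p ∈ closure (P A) → ∀ x ∈ Ω, x ≠ p →
      ∃ v ∈ V, ∃ s, 0 ≤ s ∧ s ≤ C * dist x p ∧ x + s • v ∉ Ω) := by
    intro A
    by_cases h : (P A).Nonempty ∧ Disjoint (P A) Ω
    · obtain ⟨V, C, hC, hV⟩ := hp_obstacle Ω (P A) (frontier Ω) hΩ.isBounded (hPo A) (hPc A) h.1 h.2 hK
      exact ⟨V, C, hC, fun _ _ => hV⟩
    · exact ⟨∅, 1, one_pos, fun h1 h2 => absurd ⟨h1, h2⟩ h⟩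
  choose V C hC hV using hob
  set good := 𝓗.powerset.filter (fun A => (P A).Nonempty ∧ Disjoint (P A) Ω) with hgood
  have hcell : ∀ p ∈ frontier Ω, ∃ A ∈ good, p ∈ closure (P A) := by
    intro p hp
    rw [hΩ.frontier_closure, frontier_eq_closure_inter_closure] at hp
    have hden : Dense (⋂ H ∈ 𝓗, Hᶜ) :=
      dense_biInter_of_isOpen (S := (𝓗 : Set (Set (EuclideanSpace ℝ (Fin n))))) (f := fun H => Hᶜ)
        (fun H hH => (hd H hH).1) 𝓗.countable_toSet (fun H hH => (hd H hH).2)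
    have hsub : (closure Ω)ᶜ ∩ (⋂ H ∈ 𝓗, Hᶜ) ⊆ ⋃ A ∈ good, P A := by
      rintro y ⟨hy, hyH⟩
      rw [mem_iInter₂] at hyH
      set A := 𝓗.filter (fun H => ⟪a H, y⟫ < c H) with hA
      have hyP : y ∈ P A := by
        simp only [hP, mem_iInter]
        intro H hH
        have hne : ⟪a H, y⟫ ≠ c H := by
          intro h
          apply hyH H hH
          rw [(ha H hH).2]; exact h
        by_cases hlt : ⟪a H, y⟫ < c H
        · rw [if_pos (by simp [hA, hH, hlt])]; exact hlt
        · rw [if_neg (by simp [hA, hlt])]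
          exact lt_of_le_of_ne (not_lt.1 hlt) hne.symm
      have hfr : ∀ w ∈ P A, w ∉ frontier Ω := by
        intro w hw hwf
        obtain ⟨H, hH, hwH⟩ := mem_iUnion₂.1 (hΩ.subset_union hwf)
        have hw' := mem_iInter₂.1 hw H hH
        rw [(ha H hH).2] at hwH
        have hwH' : ⟪a H, w⟫ = c H := hwH
        split_ifs at hw' with hif
        · exact absurd hwH' (ne_of_lt hw')
        · exact absurd hwH' (ne_of_gt hw')
      have hsplit := isPreconnected_iff_subset_of_disjoint.1 (hPc A).isPreconnected Ω (closure Ω)ᶜ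
        hΩ.isOpen isClosed_closure.isOpen_compl
        (by
          intro w hw
          by_cases h1 : w ∈ Ω
          · exact Or.inl h1
          · right
            intro h2
            apply hfr w hw
            rw [hΩ.isOpen.frontier_eq]
            exact ⟨h2, h1⟩)
        (by
          ext w
          simp only [mem_inter_iff, mem_compl_iff, mem_empty_iff_false, iff_false]
          rintro ⟨-, h1, h2⟩
          exact h2 (subset_closure h1))
      have hdis : Disjoint (P A) Ω := by
        rcases hsplit with h | h
        · exact absurd (subset_closure (h hyP)) hy
        · exact disjoint_left.2 fun w hw hwΩ => h hw (subset_closure hwΩ)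
      refine mem_iUnion₂.2 ⟨A, ?_, hyP⟩
      rw [hgood, Finset.mem_filter]
      exact ⟨Finset.mem_powerset.2 (Finset.filter_subset _ _), ⟨y, hyP⟩, hdis⟩
    have h1 := closure_minimal (hden.open_subset_closure_inter isClosed_closure.isOpen_compl)
      isClosed_closure hp.2
    have h2 := closure_mono hsub h1
    rw [Finset.closure_biUnion] at h2
    obtain ⟨A, hA, hpA⟩ := mem_iUnion₂.1 h2
    exact ⟨A, hA, hpA⟩
  refine ⟨good.biUnion V, 1 + ∑ A ∈ good, C A, ?_, fun p hp x hx => ?_⟩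
  · have := Finset.sum_nonneg (s := good) (fun A _ => (hC A).le)
    linarith
  · obtain ⟨A, hA, hpA⟩ := hcell p hp
    have hA' := (Finset.mem_filter.1 hA).2
    have hxp : x ≠ p := by
      rintro rfl
      rw [hΩ.isOpen.frontier_eq] at hp
      exact hp.2 hx
    obtain ⟨v, hv, s, hs0, hs, hout⟩ := hV A hA'.1 hA'.2 p hp hpA x hx hxp
    refine ⟨v, Finset.mem_biUnion.2 ⟨A, hA, hv⟩, s, hs0, hs.trans ?_, hout⟩
    refine mul_le_mul_of_nonneg_right ?_ dist_nonneg
    have := Finset.single_le_sum (f := C) (fun A _ => (hC A).le) hA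
    linarith

end cells

/-- Hardy–Poincaré inequality on a bounded polyhedral domain. -/
theorem hardy_poincare_polyhedral {n : ℕ} (hn : 2 ≤ n)
    (Ω : Set (EuclideanSpace ℝ (Fin n))) (𝓗 : Finset (Set (EuclideanSpace ℝ (Fin n))))
    (hΩ : IsPolyhedralDomain Ω 𝓗) (hS : (polySingularSet Ω 𝓗).Nonempty) :
    ∃ κ : ℝ, 0 < κ ∧ ∀ u : EuclideanSpace ℝ (Fin n) → ℝ,
      ContinuousOn u (closure Ω) → ContDiffOn ℝ 1 u Ω →
      (∀ x ∈ frontier Ω, u x = 0) →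
      (∫⁻ x in Ω, ENNReal.ofReal (u x ^ 2 / infDist x (polySingularSet Ω 𝓗) ^ 2)) +
          (∫⁻ x in Ω, ENNReal.ofReal (‖gradient u x‖ ^ 2)) ≤
        ENNReal.ofReal κ * ∫⁻ x in Ω, ENNReal.ofReal (‖gradient u x‖ ^ 2) := by
  classical
  obtain ⟨V, C, hC, hV⟩ := hp_geometry Ω 𝓗 hn hΩ
  have ho := hΩ.isOpen
  have hb := hΩ.isBounded
  set S := polySingularSet Ω 𝓗 with hSdef
  have hη : ∀ x ∈ Ω, 0 < infDist x S := by
    intro x hx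
    have h1 : x ∉ closure S := by
      intro h
      have : closure S ⊆ Ωᶜ := by
        refine closure_minimal (fun y hy => ?_) ho.isClosed_compl
        have := hy.1
        rw [ho.frontier_eq] at this
        exact this.2
      exact this h hx
    exact (infDist_pos_iff_notMem_closure hS).1 h1
  set W := V.erase 0 with hW
  have hsum0 : 0 ≤ ∑ v ∈ W, ‖v‖ ^ 2 := Finset.sum_nonneg fun v _ => by positivity
  refine ⟨(2 * C) ^ 2 * (4 * ∑ v ∈ W, ‖v‖ ^ 2) + 1, by positivity, fun u huc hud hu0 => ?_⟩
  set I := ∫⁻ x in Ω, ENNReal.ofReal (‖gradient u x‖ ^ 2) with hI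
  have hpt : ∀ x ∈ Ω, ENNReal.ofReal (u x ^ 2 / infDist x S ^ 2) ≤
      ∑ v ∈ W, ENNReal.ofReal ((2 * C) ^ 2) * ENNReal.ofReal (u x ^ 2 / hpExit Ω v x ^ 2) := by
    intro x hx
    have hx0 := hη x hx
    obtain ⟨p, hpS, hxp⟩ := (infDist_lt_iff hS).1 (show infDist x S < 2 * infDist x S by linarith)
    obtain ⟨v, hv, s, hs0, hs, hout⟩ := hV p hpS.1 x hx
    have hv0 : v ≠ 0 := by
      rintro rfl
      simp [hx] at hout
    have hvW : v ∈ W := Finset.mem_erase.2 ⟨hv0, hv⟩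
    have hD := hp_exit_pos Ω ho hb v x hv0 hx
    have hDs := hp_exit_le Ω v x s hs0 hout
    have hDη : hpExit Ω v x ≤ 2 * C * infDist x S := by
      calc _ ≤ C * dist x p := hDs.trans hs
        _ ≤ C * (2 * infDist x S) := by gcongr
        _ = _ := by ring
    refine le_trans ?_ (Finset.single_le_sum (f := fun v => ENNReal.ofReal ((2 * C) ^ 2) *
      ENNReal.ofReal (u x ^ 2 / hpExit Ω v x ^ 2)) (fun _ _ => zero_le) hvW)
    rw [← ENNReal.ofReal_mul (by positivity)]
    apply ENNReal.ofReal_le_ofReal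
    rw [div_le_iff₀ (by positivity)]
    have h2 : hpExit Ω v x ^ 2 ≤ (2 * C * infDist x S) ^ 2 := by gcongr
    calc u x ^ 2 = u x ^ 2 / hpExit Ω v x ^ 2 * hpExit Ω v x ^ 2 := by field_simp
      _ ≤ u x ^ 2 / hpExit Ω v x ^ 2 * (2 * C * infDist x S) ^ 2 := by gcongr
      _ = _ := by ring
  have hdir : ∀ v ∈ W, ∫⁻ x in Ω, ENNReal.ofReal (u x ^ 2 / hpExit Ω v x ^ 2) ≤
      4 * (ENNReal.ofReal (‖v‖ ^ 2) * I) := by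
    intro v hv
    refine (hp_hardy_dir volume Ω ho hb v (Finset.ne_of_mem_erase hv) u huc
      (hud.differentiableOn (by norm_num)) hu0).trans ?_
    gcongr
    rw [hI, ← lintegral_const_mul' _ _ ENNReal.ofReal_ne_top]
    refine lintegral_mono fun x => ?_
    simp only
    rw [← ENNReal.ofReal_mul (by positivity)]
    apply ENNReal.ofReal_le_ofReal
    have h1 : ‖gradient u x‖ = ‖fderiv ℝ u x‖ := by
      rw [gradient, LinearIsometryEquiv.norm_map]
    rw [h1, ← mul_pow, ← sq_abs]
    have := (fderiv ℝ u x).le_opNorm v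
    rw [Real.norm_eq_abs, mul_comm] at this
    gcongr
  have hum : AEMeasurable u (volume.restrict Ω) :=
    (huc.mono subset_closure).aemeasurable ho.measurableSet
  have hmain : ∫⁻ x in Ω, ENNReal.ofReal (u x ^ 2 / infDist x S ^ 2) ≤
      ENNReal.ofReal ((2 * C) ^ 2 * (4 * ∑ v ∈ W, ‖v‖ ^ 2)) * I := by
    calc _ ≤ ∫⁻ x in Ω, ∑ v ∈ W, ENNReal.ofReal ((2 * C) ^ 2) *
            ENNReal.ofReal (u x ^ 2 / hpExit Ω v x ^ 2) := setLIntegral_mono' ho.measurableSet hpt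
      _ = ∑ v ∈ W, ENNReal.ofReal ((2 * C) ^ 2) * 
            ∫⁻ x in Ω, ENNReal.ofReal (u x ^ 2 / hpExit Ω v x ^ 2) := by
          rw [lintegral_finsetSum']
          · refine Finset.sum_congr rfl fun v hv => ?_
            exact lintegral_const_mul' _ _ ENNReal.ofReal_ne_top
          · intro v hv
            have hm := hp_exit_meas Ω ho hb v (Finset.ne_of_mem_erase hv)
            exact (((hum.pow_const 2).div (hm.pow_const 2).aemeasurable).ennreal_ofReal).const_mul _
      _ ≤ ∑ v ∈ W, ENNReal.ofReal ((2 * C) ^ 2) * (4 * (ENNReal.ofReal (‖v‖ ^ 2) * I)) := by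
          refine Finset.sum_le_sum fun v hv => ?_
          exact mul_le_mul_right (hdir v hv) _
      _ = _ := by
          rw [ENNReal.ofReal_mul (by positivity), ENNReal.ofReal_mul (by norm_num),
            ENNReal.ofReal_sum_of_nonneg (fun v _ => by positivity), ← Finset.mul_sum,
            ← Finset.mul_sum, ← Finset.sum_mul]
          norm_num [mul_assoc]
  rw [ENNReal.ofReal_add (by positivity) (by norm_num), ENNReal.ofReal_one, add_mul, one_mul]
  gcongr
end

section
/- Let F ⊂ ℝ² be a finite set whose convex hull has nonempty interior, let Ω be the interior of the convex hull of F, let S be the set of extreme points of the closure of Ω, and let η(x) = dist(x, S). Then there exists a constant κ > 0, depending only on Ω, such that for every function u : ℝ² → ℝ that is continuous on the closure of Ω, continuously differentiable on Ω, and satisfies u = 0 on ∂Ω, one has ∫_Ω u(x)²/η(x)² dx + ∫_Ω ‖∇u(x)‖² dx ≤ κ ∫_Ω ‖∇u(x)‖² dx (an inequality in the extended nonnegative reals). -/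
open MeasureTheory Metric Set

/-- Cauchy–Schwarz on an interval. -/
lemma hp_sq_integral_le (f : ℝ → ℝ) (a : ℝ) (ha : a < 0) (hf : ContinuousOn f (Icc a 0)) :
    (∫ t in a..0, f t) ^ 2 ≤ (-a) * ∫ t in a..0, f t ^ 2 := by
  have hu : uIcc a 0 = Icc a 0 := uIcc_of_le ha.le
  set I := ∫ t in a..0, f t with hI
  have h1 : IntervalIntegrable f volume a 0 :=
    ContinuousOn.intervalIntegrable (by rw [hu]; exact hf)
  have h2 : IntervalIntegrable (fun t => f t ^ 2) volume a 0 :=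
    ContinuousOn.intervalIntegrable (by rw [hu]; exact hf.pow 2)
  have h0 : 0 ≤ ∫ t in a..0, ((-a) * f t - I) ^ 2 :=
    intervalIntegral.integral_nonneg ha.le (fun t _ => sq_nonneg _)
  have h3 : ∫ t in a..0, ((-a) * f t - I) ^ 2
      = ∫ t in a..0, ((a ^ 2 * f t ^ 2 + (2 * a * I) * f t) + I ^ 2) := by
    congr 1; ext t; ring
  rw [h3, intervalIntegral.integral_add ((h2.const_mul _).add (h1.const_mul _))
    intervalIntegrable_const, intervalIntegral.integral_add (h2.const_mul _) (h1.const_mul _),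
    intervalIntegral.integral_const_mul, intervalIntegral.integral_const_mul,
    intervalIntegral.integral_const, ← hI] at h0
  simp only [smul_eq_mul] at h0
  have h4 : 0 ≤ (-a) * ((-a) * (∫ t in a..0, f t ^ 2) - I ^ 2) := by nlinarith
  have := nonneg_of_mul_nonneg_right h4 (by linarith : 0 < -a)
  linarith

/-- One-dimensional estimate along a segment contained in `Ω`. -/
lemma hp_segment {Ω : Set (EuclideanSpace ℝ (Fin 2))} (hΩ : IsOpen Ω)
    {u : EuclideanSpace ℝ (Fin 2) → ℝ} (hu : ContDiffOn ℝ 1 u Ω)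
    (x e : EuclideanSpace ℝ (Fin 2)) (he : ‖e‖ = 1) (a : ℝ) (ha : a < 0)
    (hseg : ∀ t ∈ Icc a 0, x + t • e ∈ Ω) :
    (u x - u (x + a • e)) ^ 2 ≤ (-a) * ∫ t in a..0, ‖fderiv ℝ u (x + t • e)‖ ^ 2 := by
  have huI : uIcc a 0 = Icc a 0 := uIcc_of_le ha.le
  have hcl : Continuous (fun t : ℝ => x + t • e) := by fun_prop
  have hcf : ContinuousOn (fun t : ℝ => fderiv ℝ u (x + t • e)) (Icc a 0) :=
    (hu.continuousOn_fderiv_of_isOpen hΩ le_rfl).comp hcl.continuousOn hseg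
  have hcd : ContinuousOn (fun t : ℝ => fderiv ℝ u (x + t • e) e) (Icc a 0) :=
    hcf.clm_apply continuousOn_const
  have hder : ∀ t ∈ uIcc a 0, HasDerivAt (fun t : ℝ => u (x + t • e))
      (fderiv ℝ u (x + t • e) e) t := by
    intro t ht
    rw [huI] at ht
    have h1 : HasFDerivAt u (fderiv ℝ u (x + t • e)) (x + t • e) :=
      ((hu.differentiableOn (by norm_num)).differentiableAt
        (hΩ.mem_nhds (hseg t ht))).hasFDerivAt
    have h2 : HasDerivAt (fun t : ℝ => x + t • e) e t := by
      simpa using ((hasDerivAt_id t).smul_const e).const_add x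
    exact h1.comp_hasDerivAt t h2
  have hint := intervalIntegral.integral_eq_sub_of_hasDerivAt hder
    (ContinuousOn.intervalIntegrable (by rw [huI]; exact hcd))
  have hcs := hp_sq_integral_le _ a ha hcd
  rw [hint] at hcs
  simp only [zero_smul, add_zero] at hcs
  refine hcs.trans (mul_le_mul_of_nonneg_left ?_ (by linarith))
  refine intervalIntegral.integral_mono_on ha.le
    (ContinuousOn.intervalIntegrable (by rw [huI]; exact hcd.pow 2))
    (ContinuousOn.intervalIntegrable (by rw [huI]; exact hcf.norm.pow 2)) ?_
  intro t _
  have := (fderiv ℝ u (x + t • e)).le_opNorm e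
  rw [he, mul_one] at this
  rw [← sq_abs]
  exact pow_le_pow_left₀ (abs_nonneg _) (by simpa using this) 2

/-- Estimate of `u x` by the integral over the chord through `x`. -/
lemma hp_chord {Ω : Set (EuclideanSpace ℝ (Fin 2))} (hΩ : IsOpen Ω) (hconv : Convex ℝ Ω)
    {u : EuclideanSpace ℝ (Fin 2) → ℝ} (hc : ContinuousOn u (closure Ω))
    (hu : ContDiffOn ℝ 1 u Ω) (h0 : ∀ x ∈ frontier Ω, u x = 0)
    (x e : EuclideanSpace ℝ (Fin 2)) (he : ‖e‖ = 1) (hx : x ∈ Ω) (D : ℝ)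
    (hD : ∀ t : ℝ, x + t • e ∈ Ω → |t| ≤ D) :
    ENNReal.ofReal (u x ^ 2) ≤ ENNReal.ofReal D * ∫⁻ t in Icc (-D) 0,
      Ω.indicator (fun y => ENNReal.ofReal (‖fderiv ℝ u y‖ ^ 2)) (x + t • e) := by
  have hcl : Continuous (fun t : ℝ => x + t • e) := by fun_prop
  set T : Set ℝ := (fun t : ℝ => x + t • e) ⁻¹' Ω with hT
  have hTo : IsOpen T := hΩ.preimage hcl
  have h0T : (0 : ℝ) ∈ T := by simpa [hT] using hx
  have hTb : BddBelow T := ⟨-D, fun t ht => (abs_le.1 (hD t ht)).1⟩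
  set a := sInf T with ha
  have haT : a ∉ T := by
    intro h
    obtain ⟨ε, hε, hb⟩ := Metric.isOpen_iff.1 hTo a h
    have : a - ε / 2 ∈ T := hb (by
      rw [Metric.mem_ball, Real.dist_eq, sub_sub_cancel_left, abs_neg, abs_of_pos (by linarith)]
      linarith)
    have := csInf_le hTb this
    linarith
  have ha0 : a < 0 := lt_of_le_of_ne (csInf_le hTb h0T) (fun h => haT (by rw [h]; exact h0T))
  have haD : -D ≤ a := le_csInf ⟨0, h0T⟩ (fun t ht => (abs_le.1 (hD t ht)).1)
  have hacl : x + a • e ∈ closure Ω := by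
    have h1 : a ∈ closure T := csInf_mem_closure ⟨0, h0T⟩ hTb
    exact (hcl.closure_preimage_subset Ω) h1
  have hua : u (x + a • e) = 0 := h0 _ ⟨hacl, by rw [hΩ.interior_eq]; exact haT⟩
  have hseg : ∀ t, a < t → t ≤ 0 → x + t • e ∈ Ω := by
    intro t ht ht0
    obtain ⟨s, hs, hst⟩ := exists_lt_of_csInf_lt ⟨0, h0T⟩ ht
    have hTc : T.OrdConnected := by
      refine ⟨?_⟩
      intro p hp q hq r hr
      rcases eq_or_lt_of_le (hr.1.trans hr.2) with h | h
      · have : r = p := le_antisymm (by rw [h]; exact hr.2) hr.1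
        rw [this]; exact hp
      · have hqp : 0 < q - p := by linarith
        have := hconv hp hq (a := (q - r) / (q - p)) (b := (r - p) / (q - p))
          (div_nonneg (by linarith [hr.2]) hqp.le) (div_nonneg (by linarith [hr.1]) hqp.le)
          (by field_simp; ring)
        have e1 : ((q - r) / (q - p)) • (x + p • e) + ((r - p) / (q - p)) • (x + q • e)
            = x + r • e := by
          have e2 : (q - r) / (q - p) = 1 - (r - p) / (q - p) := by field_simp; ring
          have e3 : r = (1 - (r - p) / (q - p)) * p + (r - p) / (q - p) * q := by
            field_simp; ring
          rw [e2]
          conv_rhs => rw [e3]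
          module
        simp only [e1] at this
        exact this
    exact hTc.out hs h0T ⟨hst.le, ht0⟩
  set J := ∫⁻ t in Icc (-D) 0,
      Ω.indicator (fun y => ENNReal.ofReal (‖fderiv ℝ u y‖ ^ 2)) (x + t • e) with hJ
  have hbound : ∀ b ∈ Ioo a 0,
      ENNReal.ofReal ((u x - u (x + b • e)) ^ 2) ≤ ENNReal.ofReal D * J := by
    intro b hb
    have hsb : ∀ t ∈ Icc b 0, x + t • e ∈ Ω := fun t ht => hseg t (hb.1.trans_le ht.1) ht.2
    have h1 := hp_segment hΩ hu x e he b hb.2 hsb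
    have hcf : ContinuousOn (fun t : ℝ => ‖fderiv ℝ u (x + t • e)‖ ^ 2) (Icc b 0) :=
      (((hu.continuousOn_fderiv_of_isOpen hΩ le_rfl).comp hcl.continuousOn hsb).norm).pow 2
    refine (ENNReal.ofReal_le_ofReal h1).trans ?_
    rw [ENNReal.ofReal_mul (by linarith [hb.2])]
    gcongr
    · linarith [hb.1]
    · rw [intervalIntegral.integral_of_le hb.2.le, ofReal_integral_eq_lintegral_ofReal
        ((hcf.integrableOn_Icc).mono_set Ioc_subset_Icc_self)
        (Filter.Eventually.of_forall fun t => sq_nonneg _)]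
      calc _ ≤ ∫⁻ t in Ioc b 0,
            Ω.indicator (fun y => ENNReal.ofReal (‖fderiv ℝ u y‖ ^ 2)) (x + t • e) := by
            refine setLIntegral_mono' measurableSet_Ioc ?_
            intro t ht
            rw [indicator_of_mem (hsb t ⟨ht.1.le, ht.2⟩)]
        _ ≤ J := by
            refine lintegral_mono_set ?_
            intro t ht
            exact ⟨by linarith [hb.1, ht.1], ht.2⟩
  have hlim : Filter.Tendsto (fun b : ℝ => ENNReal.ofReal ((u x - u (x + b • e)) ^ 2))
      (nhdsWithin a (Ioi a)) (nhds (ENNReal.ofReal (u x ^ 2))) := by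
    have h1 : Filter.Tendsto (fun b : ℝ => x + b • e) (nhdsWithin a (Ioi a))
        (nhdsWithin (x + a • e) (closure Ω)) := by
      refine tendsto_nhdsWithin_iff.2 ⟨(hcl.tendsto a).mono_left nhdsWithin_le_nhds, ?_⟩
      filter_upwards [Ioo_mem_nhdsGT ha0] with b hb
      exact subset_closure (hseg b hb.1 hb.2.le)
    have h2 : Filter.Tendsto (fun b : ℝ => u (x + b • e)) (nhdsWithin a (Ioi a)) (nhds 0) := by
      have := (hc _ hacl).tendsto.comp h1
      rwa [hua] at this
    have h3 := ((tendsto_const_nhds (x := u x)).sub h2).pow 2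
    rw [sub_zero] at h3
    exact (ENNReal.continuous_ofReal.tendsto _).comp h3
  refine le_of_tendsto hlim ?_
  filter_upwards [Ioo_mem_nhdsGT ha0] with b hb using hbound b hb

/-- The bound near one vertex, for which a functional with `c ‖x - v‖ ≤ ℓ (x - v)` exists. -/
lemma hp_vertex {Ω : Set (EuclideanSpace ℝ (Fin 2))} (hΩ : IsOpen Ω) (hconv : Convex ℝ Ω)
    (v : EuclideanSpace ℝ (Fin 2)) (l : EuclideanSpace ℝ (Fin 2) →L[ℝ] ℝ) (c : ℝ) (hc0 : 0 < c)
    (hl : ∀ x ∈ Ω, c * ‖x - v‖ ≤ l (x - v)) (hv : v ∉ Ω) :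
    ∃ C : ℝ, 0 ≤ C ∧ ∀ u : EuclideanSpace ℝ (Fin 2) → ℝ,
      ContinuousOn u (closure Ω) → ContDiffOn ℝ 1 u Ω → (∀ x ∈ frontier Ω, u x = 0) →
      ∃ Φ : EuclideanSpace ℝ (Fin 2) → ENNReal, Measurable Φ ∧
        (∀ x ∈ Ω, ENNReal.ofReal (u x ^ 2 / dist x v ^ 2) ≤ Φ x) ∧
        ∫⁻ x, Φ x ≤ ENNReal.ofReal C * ∫⁻ x in Ω, ENNReal.ofReal (‖fderiv ℝ u x‖ ^ 2) := by
  obtain ⟨e, he, hle⟩ : ∃ e : EuclideanSpace ℝ (Fin 2), ‖e‖ = 1 ∧ l e = 0 := by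
    have hk : (l : EuclideanSpace ℝ (Fin 2) →ₗ[ℝ] ℝ).ker ≠ ⊥ :=
      LinearMap.ker_ne_bot_of_finrank_lt (by simp)
    obtain ⟨w, hw, hw0⟩ := Submodule.exists_mem_ne_zero_of_ne_bot hk
    refine ⟨‖w‖⁻¹ • w, ?_, ?_⟩
    · rw [norm_smul, norm_inv, norm_norm, inv_mul_cancel₀ (norm_ne_zero_iff.2 hw0)]
    · have : l w = 0 := hw
      rw [map_smul, this, smul_zero]
  set K : ℝ := 2 / c with hK
  set M : ℝ := ‖l‖ with hM
  have hKpos : 0 < K := by positivity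
  refine ⟨M ^ 2 * K ^ 2, by positivity, ?_⟩
  intro u huc hud hu0
  set G : EuclideanSpace ℝ (Fin 2) → ENNReal :=
    Ω.indicator (fun y => ENNReal.ofReal (‖fderiv ℝ u y‖ ^ 2)) with hG
  have hGm : Measurable G :=
    (((measurable_fderiv ℝ u).norm.pow_const 2).ennreal_ofReal).indicator hΩ.measurableSet
  set w : EuclideanSpace ℝ (Fin 2) → ℝ → ENNReal := fun x t =>
    if -(K * l (x - v)) ≤ t ∧ t ≤ 0 then ENNReal.ofReal (M ^ 2 * K / l (x - v)) else 0 with hw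
  have hwm : Measurable (Function.uncurry w) := by
    refine Measurable.ite ?_ ?_ measurable_const
    · have m1 : Measurable fun p : EuclideanSpace ℝ (Fin 2) × ℝ => -(K * l (p.1 - v)) := by
        fun_prop
      exact (measurableSet_le m1 measurable_snd).inter
        (measurableSet_le measurable_snd measurable_const)
    · refine Measurable.ennreal_ofReal ?_
      exact Measurable.div measurable_const (by fun_prop)
  have hwt : ∀ x (t : ℝ) s, w (x + t • e) s = w x s := by
    intro x t s
    have : l (x + t • e - v) = l (x - v) := by simp [hle]
    simp only [hw, this]
  have hwI : ∀ x (f : ℝ → ENNReal), ∫⁻ t, w x t * f t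
      = ∫⁻ t in Icc (-(K * l (x - v))) 0, ENNReal.ofReal (M ^ 2 * K / l (x - v)) * f t := by
    intro x f
    rw [← lintegral_indicator measurableSet_Icc]
    congr 1; ext t
    by_cases h : -(K * l (x - v)) ≤ t ∧ t ≤ 0
    · rw [indicator_of_mem (show t ∈ Icc _ _ from h)]; simp only [hw, if_pos h]
    · rw [indicator_of_notMem (show t ∉ Icc _ _ from h)]; simp only [hw, if_neg h, zero_mul]
  have hpm : Measurable (Function.uncurry fun x (t : ℝ) => w x t * G (x + t • e)) :=
    hwm.mul (hGm.comp (by fun_prop))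
  refine ⟨fun x => ∫⁻ t, w x t * G (x + t • e), hpm.lintegral_prod_right', ?_, ?_⟩
  · intro x hx
    have hxv : 0 < ‖x - v‖ := norm_pos_iff.2 (sub_ne_zero.2 fun h => hv (h ▸ hx))
    set L := l (x - v) with hL
    have hLpos : 0 < L := lt_of_lt_of_le (by positivity) (hl x hx)
    have hLM : L ≤ M * ‖x - v‖ := (le_abs_self _).trans (l.le_opNorm (x - v))
    have hD : ∀ t : ℝ, x + t • e ∈ Ω → |t| ≤ K * L := by
      intro t ht
      have h1 := hl _ ht
      have h2 : l (x + t • e - v) = L := by simp [hle, hL]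
      rw [h2] at h1
      have h3 := hl x hx
      have h4 : |t| ≤ ‖x + t • e - v‖ + ‖x - v‖ := by
        have : |t| = ‖(x + t • e - v) - (x - v)‖ := by
          rw [show (x + t • e - v) - (x - v) = t • e by abel, norm_smul, he, mul_one,
            Real.norm_eq_abs]
        rw [this]; exact norm_sub_le _ _
      rw [hK, div_mul_eq_mul_div, le_div_iff₀ hc0]
      nlinarith
    have h1 := hp_chord hΩ hconv huc hud hu0 x e he hx (K * L) hD
    beta_reduce
    have m3 : Measurable fun t : ℝ => G (x + t • e) := hGm.comp (by fun_prop)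
    rw [hwI x (fun t => G (x + t • e)), lintegral_const_mul _ m3, ← hL]
    have h2 : u x ^ 2 / dist x v ^ 2 ≤ (M ^ 2 / L ^ 2) * u x ^ 2 := by
      rw [dist_eq_norm, div_mul_eq_mul_div, div_le_div_iff₀ (by positivity) (by positivity)]
      have : L ^ 2 ≤ M ^ 2 * ‖x - v‖ ^ 2 := by
        rw [← mul_pow]; exact pow_le_pow_left₀ hLpos.le hLM 2
      nlinarith [sq_nonneg (u x)]
    calc ENNReal.ofReal (u x ^ 2 / dist x v ^ 2)
        ≤ ENNReal.ofReal ((M ^ 2 / L ^ 2) * u x ^ 2) := ENNReal.ofReal_le_ofReal h2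
      _ = ENNReal.ofReal (M ^ 2 / L ^ 2) * ENNReal.ofReal (u x ^ 2) :=
          ENNReal.ofReal_mul (by positivity)
      _ ≤ ENNReal.ofReal (M ^ 2 / L ^ 2) * (ENNReal.ofReal (K * L) * _) := by gcongr
      _ = _ := by
          rw [← mul_assoc, ← ENNReal.ofReal_mul (by positivity)]
          congr 2
          field_simp
  · rw [lintegral_lintegral_swap hpm.aemeasurable]
    calc ∫⁻ t : ℝ, ∫⁻ x, w x t * G (x + t • e)
        = ∫⁻ t : ℝ, ∫⁻ x, w x t * G x := by
          congr 1; ext t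
          rw [← lintegral_add_right_eq_self (fun x => w x t * G x) (t • e)]
          simp only [hwt]
      _ = ∫⁻ x, ∫⁻ t : ℝ, w x t * G x := by
          have m2 : Measurable (Function.uncurry fun x (t : ℝ) => w x t * G x) :=
            hwm.mul (hGm.comp measurable_fst)
          exact (lintegral_lintegral_swap m2.aemeasurable).symm
      _ ≤ ∫⁻ x, ENNReal.ofReal (M ^ 2 * K ^ 2) * G x := by
          refine lintegral_mono fun x => ?_
          simp only
          rw [hwI x (fun _ => G x), setLIntegral_const, Real.volume_Icc, mul_right_comm]
          gcongr
          rcases le_or_gt (l (x - v)) 0 with h | h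
          · rw [ENNReal.ofReal_of_nonpos (p := M ^ 2 * K / l (x - v))
              (div_nonpos_of_nonneg_of_nonpos (by positivity) h), zero_mul]
            exact zero_le
          · rw [← ENNReal.ofReal_mul (by positivity)]
            refine ENNReal.ofReal_le_ofReal (le_of_eq ?_)
            field_simp
            ring
      _ = _ := by
          rw [lintegral_const_mul _ hGm, hG, lintegral_indicator hΩ.measurableSet]

/-- Existence of the separating functional at a vertex. -/
lemma hp_functional (F : Set (EuclideanSpace ℝ (Fin 2))) (hF : F.Finite)
    (v : EuclideanSpace ℝ (Fin 2)) (hv : v ∈ Set.extremePoints ℝ (convexHull ℝ F)) :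
    ∃ (l : EuclideanSpace ℝ (Fin 2) →L[ℝ] ℝ) (c : ℝ), 0 < c ∧
      ∀ x ∈ convexHull ℝ F, c * ‖x - v‖ ≤ l (x - v) := by
  have hv' := ((convex_convexHull ℝ F).mem_extremePoints_iff_convex_sdiff.1 hv).2
  have hnot : v ∉ convexHull ℝ (F \ {v}) := by
    intro h
    have : convexHull ℝ (F \ {v}) ⊆ convexHull ℝ F \ {v} :=
      convexHull_min (sdiff_subset_sdiff_left (subset_convexHull ℝ F)) hv'
    exact (this h).2 rfl
  obtain ⟨l, r, hlr, hr⟩ := geometric_hahn_banach_point_closed (convex_convexHull ℝ (F \ {v}))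
    (hF.subset sdiff_subset |>.isCompact_convexHull ℝ).isClosed hnot
  obtain ⟨R, hR⟩ := hF.isBounded.subset_closedBall v
  have hm : 0 < r - l v := by linarith
  set R' := max R 1 with hR'
  have hRpos : 0 < R' := lt_max_of_lt_right one_pos
  refine ⟨l, (r - l v) / R', by positivity, ?_⟩
  have hcv : Convex ℝ {x | (r - l v) / R' * ‖x - v‖ ≤ l (x - v)} := by
    intro x hx y hy a b ha hb hab
    simp only [mem_ofPred_eq] at hx hy ⊢
    have e1 : a • x + b • y - v = a • (x - v) + b • (y - v) := by
      have : a = 1 - b := by linarith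
      rw [this]; module
    have e2 : ‖a • (x - v) + b • (y - v)‖ ≤ a * ‖x - v‖ + b * ‖y - v‖ := by
      refine (norm_add_le _ _).trans ?_
      rw [norm_smul, norm_smul, Real.norm_of_nonneg ha, Real.norm_of_nonneg hb]
    rw [e1, map_add, map_smul, map_smul, smul_eq_mul, smul_eq_mul]
    have hq : 0 ≤ (r - l v) / R' := by positivity
    calc _ ≤ (r - l v) / R' * (a * ‖x - v‖ + b * ‖y - v‖) := by gcongr
      _ = a * ((r - l v) / R' * ‖x - v‖) + b * ((r - l v) / R' * ‖y - v‖) := by ring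
      _ ≤ _ := by gcongr
  refine fun x hx => convexHull_min ?_ hcv hx
  intro x hx
  by_cases hxv : x = v
  · simp [hxv]
  · have h1 := hr x (subset_convexHull ℝ _ ⟨hx, hxv⟩)
    have h2 : ‖x - v‖ ≤ R' := by
      have := hR hx
      rw [mem_closedBall, dist_eq_norm] at this
      exact this.trans (le_max_left _ _)
    simp only [mem_ofPred_eq, map_sub]
    rw [div_mul_eq_mul_div, div_le_iff₀ hRpos]
    nlinarith [norm_nonneg (x - v)]

/-- Hardy–Poincaré inequality on a convex polygon in the plane, with weight the distance
to the set of vertices (extreme points) of the polygon. -/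
theorem hardy_poincare_polygon (F : Set (EuclideanSpace ℝ (Fin 2))) (hF : F.Finite)
    (hint : (interior (convexHull ℝ F)).Nonempty)
    (Ω : Set (EuclideanSpace ℝ (Fin 2))) (hΩ : Ω = interior (convexHull ℝ F))
    (S : Set (EuclideanSpace ℝ (Fin 2))) (hS : S = Set.extremePoints ℝ (closure Ω)) :
    ∃ κ : ℝ, 0 < κ ∧ ∀ u : EuclideanSpace ℝ (Fin 2) → ℝ,
      ContinuousOn u (closure Ω) → ContDiffOn ℝ 1 u Ω →
      (∀ x ∈ frontier Ω, u x = 0) →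
      (∫⁻ x in Ω, ENNReal.ofReal (u x ^ 2 / infDist x S ^ 2)) +
          (∫⁻ x in Ω, ENNReal.ofReal (‖gradient u x‖ ^ 2)) ≤
        ENNReal.ofReal κ * ∫⁻ x in Ω, ENNReal.ofReal (‖gradient u x‖ ^ 2) := by
  have hcpt : IsCompact (convexHull ℝ F) := hF.isCompact_convexHull ℝ
  have hclos : closure Ω = convexHull ℝ F := by
    rw [hΩ, (convex_convexHull ℝ F).closure_interior_eq_closure_of_nonempty_interior hint,
      hcpt.isClosed.closure_eq]
  have hΩo : IsOpen Ω := by rw [hΩ]; exact isOpen_interior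
  have hΩc : Convex ℝ Ω := by rw [hΩ]; exact (convex_convexHull ℝ F).interior
  have hΩsub : Ω ⊆ convexHull ℝ F := by rw [hΩ]; exact interior_subset
  rw [hclos] at hS
  have hSfin : S.Finite := hF.subset (by rw [hS]; exact extremePoints_convexHull_subset)
  have hSne : S.Nonempty := by
    rw [hS]; exact hcpt.extremePoints_nonempty (hint.mono interior_subset)
  have key : ∀ v : S, ∃ C : ℝ, 0 ≤ C ∧ ∀ u : EuclideanSpace ℝ (Fin 2) → ℝ,
      ContinuousOn u (closure Ω) → ContDiffOn ℝ 1 u Ω → (∀ x ∈ frontier Ω, u x = 0) →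
      ∃ Φ : EuclideanSpace ℝ (Fin 2) → ENNReal, Measurable Φ ∧
        (∀ x ∈ Ω, ENNReal.ofReal (u x ^ 2 / dist x v ^ 2) ≤ Φ x) ∧
        ∫⁻ x, Φ x ≤ ENNReal.ofReal C * ∫⁻ x in Ω, ENNReal.ofReal (‖fderiv ℝ u x‖ ^ 2) := by
    rintro ⟨v, hv⟩
    rw [hS] at hv
    obtain ⟨l, c, hc, hl⟩ := hp_functional F hF v hv
    by_cases hvΩ : v ∈ Ω
    · exfalso
      -- near `v` the inequality at `v + w` and `v - w` is contradictory
      obtain ⟨ε, hε, hb⟩ := Metric.isOpen_iff.1 hΩo v hvΩ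
      obtain ⟨w, hw⟩ := exists_ne (0 : EuclideanSpace ℝ (Fin 2))
      have hwn : 0 < ‖w‖ := norm_pos_iff.2 hw
      set s := ε / 2 / ‖w‖ with hs
      have hspos : 0 < s := by positivity
      have hn : ‖s • w‖ = ε / 2 := by
        rw [norm_smul, Real.norm_of_nonneg hspos.le, hs]; field_simp
      have h1 := hl (v + s • w) (hΩsub (hb (by
        rw [mem_ball, dist_eq_norm, add_sub_cancel_left, hn]; linarith)))
      have h2 := hl (v - s • w) (hΩsub (hb (by
        rw [mem_ball, dist_eq_norm, sub_sub_cancel_left, norm_neg, hn]; linarith)))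
      rw [add_sub_cancel_left, hn] at h1
      rw [sub_sub_cancel_left, norm_neg, hn, map_neg] at h2
      nlinarith [mul_pos hc hε]
    · exact hp_vertex hΩo hΩc v l c hc (fun x hx => hl x (hΩsub hx)) hvΩ
  choose C hC0 hC using key
  have : Fintype S := hSfin.fintype
  have hCs : 0 ≤ ∑ v, C v := Finset.sum_nonneg fun v _ => hC0 v
  refine ⟨∑ v, C v + 1, by linarith, ?_⟩
  intro u huc hud hu0
  have hgr : ∀ x, ‖gradient u x‖ = ‖fderiv ℝ u x‖ := fun x => by
    rw [gradient, LinearIsometryEquiv.norm_map]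
  simp only [hgr]
  choose Φ hΦm hΦp hΦi using fun v => hC v u huc hud hu0
  rw [ENNReal.ofReal_add hCs zero_le_one, ENNReal.ofReal_one, add_mul, one_mul]
  gcongr
  calc ∫⁻ x in Ω, ENNReal.ofReal (u x ^ 2 / infDist x S ^ 2)
      ≤ ∫⁻ x in Ω, ∑ v, Φ v x := by
        refine setLIntegral_mono' hΩo.measurableSet fun x hx => ?_
        obtain ⟨v, hv, hvd⟩ := hSfin.isCompact.exists_infDist_eq_dist hSne x
        rw [hvd]
        exact (hΦp ⟨v, hv⟩ x hx).trans
          (Finset.single_le_sum (f := fun v => Φ v x) (fun _ _ => zero_le)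
            (Finset.mem_univ _))
    _ ≤ ∫⁻ x, ∑ v, Φ v x := setLIntegral_le_lintegral _ _
    _ = ∑ v, ∫⁻ x, Φ v x := lintegral_finsetSum _ fun v _ => hΦm v
    _ ≤ ∑ v, ENNReal.ofReal (C v) * ∫⁻ x in Ω, ENNReal.ofReal (‖fderiv ℝ u x‖ ^ 2) :=
        Finset.sum_le_sum fun v _ => hΦi v
    _ = _ := by
        rw [← Finset.sum_mul, ENNReal.ofReal_sum_of_nonneg fun v _ => hC0 v]
end
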